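/- Let d ∈ ℝ^n have all entries strictly positive, let c ∈ ℝ, and let P ⊆ ℝ^n be a set such that Σ_i x_i = c for all x ∈ P. Then M_d(P) := ∪_{y∈P} {x ∈ ℝ^n : x ≺_d y} is star-shaped with respect to the point (c / Σ_i d_i)·d, i.e. for every z ∈ M_d(P) and every λ ∈ [0,1], the point λ·(c/Σ_i d_i)·d + (1−λ)·z lies in M_d(P). -/

import Mathlib

/-- A matrix is `d`-stochastic if it has nonnegative entries, each column sums to one,
and it fixes the vector `d`. -/
def IsDStochastic {n : ℕ} (d : Fin n → ℝ) (A : Matrix (Fin n) (Fin n) ℝ) : Prop :=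
  (∀ i j, 0 ≤ A i j) ∧ (∀ j, ∑ i, A i j = 1) ∧ A.mulVec d = d

/-- `x` is `d`-majorized by `y` if some `d`-stochastic matrix maps `y` to `x`. -/
def DMaj {n : ℕ} (d x y : Fin n → ℝ) : Prop :=
  ∃ A : Matrix (Fin n) (Fin n) ℝ, IsDStochastic d A ∧ x = A.mulVec y

/-!
The matrix all of whose columns are `d / ∑ i, d i` is `d`-stochastic and sends every vector of total
`c` to the same point `(c / ∑ i, d i) • d`. This point is therefore `d`-majorized by every `y ∈ P`.
The vectors `d`-majorized by a fixed `y` form a convex set, being a linear image of the convex set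
of `d`-stochastic matrices, and a union of convex sets sharing a point is star-shaped about it.
-/

section DStochastic

open Matrix

theorem replicateCol_mulVec_eq_sum_smul {m ι R : Type*} [Fintype ι] [NonUnitalCommSemiring R]
    (w : m → R) (y : ι → R) : replicateCol ι w *ᵥ y = (∑ j, y j) • w := by
  ext i
  simp [mulVec, dotProduct, ← Finset.mul_sum, mul_comm]

variable {n : ℕ} {d : Fin n → ℝ}

theorem isDStochastic_iff_mem_colStochastic {A : Matrix (Fin n) (Fin n) ℝ} :
    IsDStochastic d A ↔ A ∈ colStochastic ℝ (Fin n) ∧ A *ᵥ d = d := by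
  rw [IsDStochastic, mem_colStochastic_iff_sum, and_assoc]

theorem convex_setOf_isDStochastic (d : Fin n → ℝ) : Convex ℝ {A | IsDStochastic d A} := by
  have fixes_convex : Convex ℝ {A : Matrix (Fin n) (Fin n) ℝ | A *ᵥ d = d} :=
    (convex_singleton d).linear_preimage ((mulVecBilin ℝ ℝ).flip d)
  simp only [isDStochastic_iff_mem_colStochastic]
  exact convex_colStochastic.inter fixes_convex

theorem convex_setOf_dMaj (d y : Fin n → ℝ) : Convex ℝ {x | DMaj d x y} := by
  have image_eq : (mulVecBilin ℝ ℝ).flip y '' {A | IsDStochastic d A} = {x | DMaj d x y} := by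
    ext x
    simp [DMaj, eq_comm]
  exact image_eq ▸ (convex_setOf_isDStochastic d).linear_image _

theorem isDStochastic_replicateCol_inv_sum_smul (hd : ∀ i, 0 ≤ d i)
    (hsum : Nonempty (Fin n) → ∑ i, d i ≠ 0) :
    IsDStochastic d (replicateCol (Fin n) ((∑ i, d i)⁻¹ • d)) := by
  refine ⟨fun i _ => ?nonneg, fun j => ?sum_col, ?fixes⟩
  case nonneg => exact mul_nonneg (inv_nonneg.2 (Finset.sum_nonneg fun k _ => hd k)) (hd i)
  case sum_col => simp [← Finset.mul_sum, hsum ⟨j⟩]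
  case fixes =>
    ext i
    rw [replicateCol_mulVec_eq_sum_smul, smul_inv_smul₀ (hsum ⟨i⟩)]

theorem dMaj_sum_div_sum_smul (hd : ∀ i, 0 ≤ d i) (hsum : Nonempty (Fin n) → ∑ i, d i ≠ 0)
    (y : Fin n → ℝ) : DMaj d (((∑ i, y i) / ∑ i, d i) • d) y := by
  refine ⟨_, isDStochastic_replicateCol_inv_sum_smul hd hsum, ?_⟩
  rw [replicateCol_mulVec_eq_sum_smul, smul_smul, div_eq_mul_inv]

theorem stmt13_general (hd : ∀ i, 0 ≤ d i) (hsum : Nonempty (Fin n) → ∑ i, d i ≠ 0) {c : ℝ}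
    {P : Set (Fin n → ℝ)} (hP : ∀ x ∈ P, ∑ i, x i = c) :
    StarConvex ℝ ((c / ∑ i, d i) • d) {x | ∃ y ∈ P, DMaj d x y} := by
  rintro z ⟨y, hy, hzy⟩ a b ha hb hab
  have center_dMaj : DMaj d ((c / ∑ i, d i) • d) y := hP y hy ▸ dMaj_sum_div_sum_smul hd hsum y
  exact ⟨y, hy, convex_setOf_dMaj d y center_dMaj hzy ha hb hab⟩

end DStochastic

theorem stmt13 {n : ℕ} (d : Fin n → ℝ) (hd : ∀ i, 0 < d i) (c : ℝ)
    (P : Set (Fin n → ℝ)) (hP : ∀ x ∈ P, ∑ i, x i = c) :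
    ∀ z ∈ {x : Fin n → ℝ | ∃ y ∈ P, DMaj d x y}, ∀ t ∈ Set.Icc (0:ℝ) 1,
      t • ((c / ∑ i, d i) • d) + (1 - t) • z ∈ {x : Fin n → ℝ | ∃ y ∈ P, DMaj d x y} := by
  have hsum (_ : Nonempty (Fin n)) : 0 < ∑ i, d i :=
    Finset.sum_pos (fun i _ => hd i) Finset.univ_nonempty
  exact fun z hz t ht => stmt13_general (fun i => (hd i).le) (fun h => (hsum h).ne') hP hz
    ht.1 (sub_nonneg.2 ht.2) (add_sub_cancel t 1)
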